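/- Let X be a smooth irreducible complex affine variety, f, g ∈ 𝒪(X) regular functions such that the zero loci V(f) and V(f,g) in X are smooth of codimension 1 and 2 respectively. Then for every integer m ≥ 2, the affine variety W = {(x,t) ∈ X × 𝔸¹ | t^m·g(x) = f(x)} is smooth of the same dimension as X. -/

import Mathlib

open Polynomial

section Part1
open IsLocalRing KaehlerDifferential TensorProduct

theorem aux_der_unit (B : Type) [CommRing B] [IsLocalRing B] [Algebra ℂ B]
    [Algebra.FormallySmooth ℂ B] [Algebra.FormallySmooth ℂ (ResidueField B)]
    (x : B) (hx : x ∈ maximalIdeal B) (hx2 : x ∉ maximalIdeal B ^ 2) :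
    ∃ D : Derivation ℂ B B, IsUnit (D x) := by
  have hs : Function.Surjective (algebraMap B (ResidueField B)) := residue_surjective
  obtain ⟨l, hl⟩ := (Algebra.FormallySmooth.iff_split_injection (R := ℂ) (P := B)
    (A := ResidueField B) hs).1 inferInstance
  have hker : RingHom.ker (algebraMap B (ResidueField B)) = maximalIdeal B := ker_residue
  have hne : (1 : ResidueField B) ⊗ₜ[B] (D ℂ B x) ≠ 0 := by
    intro h0
    have h1 := LinearMap.congr_fun hl (Ideal.toCotangent _ ⟨x, hker ▸ hx⟩)
    rw [LinearMap.comp_apply, kerCotangentToTensor_toCotangent] at h1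
    erw [h0] at h1
    rw [map_zero] at h1
    have h2 := (Ideal.toCotangent_eq_zero _ _).1 h1.symm
    have h3 : x ∈ RingHom.ker (algebraMap B (ResidueField B)) ^ 2 := h2
    rw [hker] at h3
    exact hx2 h3
  obtain ⟨ψ, hψ⟩ : ∃ ψ : Module.Dual (ResidueField B) (ResidueField B ⊗[B] Ω[B⁄ℂ]),
      ψ ((1 : ResidueField B) ⊗ₜ[B] (D ℂ B x)) ≠ 0 := by
    by_contra! h
    exact hne ((Module.forall_dual_apply_eq_zero_iff (ResidueField B) _).1 h)
  let φ : Ω[B⁄ℂ] →ₗ[B] ResidueField B :=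
    (ψ.restrictScalars B) ∘ₗ (TensorProduct.mk B (ResidueField B) Ω[B⁄ℂ] 1)
  obtain ⟨χ, hχ⟩ := Module.projective_lifting_property (Algebra.linearMap B (ResidueField B)) φ hs
  refine ⟨χ.compDer (D ℂ B), ?_⟩
  have h3 : residue B (χ (D ℂ B x)) ≠ 0 := by
    have := LinearMap.congr_fun hχ (D ℂ B x)
    intro h
    apply hψ
    exact this.symm.trans h
  rwa [residue_ne_zero_iff_isUnit] at h3

theorem aux_max_bot (B : Type) [CommRing B] [IsLocalRing B] [IsNoetherianRing B] [Algebra ℂ B]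
    [Algebra.FormallySmooth ℂ B] [Algebra.FormallySmooth ℂ (ResidueField B)]
    (hnil : ∀ x ∈ maximalIdeal B, IsNilpotent x) : maximalIdeal B = ⊥ := by
  have hle : maximalIdeal B ≤ maximalIdeal B ^ 2 := by
    intro x hx
    by_contra hx2
    obtain ⟨D, hD⟩ := aux_der_unit B x hx hx2
    have hn := hnil x hx
    classical
    obtain ⟨k, hk⟩ : ∃ k, Nat.find hn = k := ⟨_, rfl⟩
    have h0 := Nat.find_spec hn
    rw [hk] at h0
    cases k with
    | zero => simp at h0
    | succ k =>
      have h1 := congrArg D h0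
      rw [Derivation.leibniz_pow, map_zero, Nat.add_sub_cancel, smul_eq_mul, nsmul_eq_mul,
        ← mul_assoc, hD.mul_left_eq_zero] at h1
      have hu : IsUnit ((k + 1 : ℕ) : B) := by
        have : ((k + 1 : ℕ) : B) = algebraMap ℂ B ((k + 1 : ℕ) : ℂ) := by simp
        rw [this]
        exact (IsUnit.mk0 _ (by exact_mod_cast Nat.succ_ne_zero k)).map _
      rw [hu.mul_right_eq_zero] at h1
      exact Nat.find_min hn (by omega) h1
  apply Submodule.eq_bot_of_le_smul_of_le_jacobson_bot (maximalIdeal B) (maximalIdeal B)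
    (IsNoetherian.noetherian _)
  · rwa [smul_eq_mul, ← pow_two]
  · rw [IsLocalRing.jacobson_eq_maximalIdeal _ bot_ne_top]

theorem aux_integral_dim (S T : Type) [CommRing S] [CommRing T] [Algebra S T]
    [Algebra.IsIntegral S T] [IsDomain S] [IsDomain T]
    (hinj : Function.Injective (algebraMap S T)) : ringKrullDim T = ringKrullDim S := by
  apply le_antisymm
  · refine Order.krullDim_le_of_strictMono (PrimeSpectrum.comap (algebraMap S T)) ?_
    intro I J hIJ
    exact Ideal.IsIntegral.comap_lt_comap hIJ
  · refine iSup_le fun l => ?_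
    have hp := l.head.2
    obtain ⟨Q, hQ, hQo⟩ := Ideal.exists_ideal_over_prime_of_isIntegral_of_isDomain (S := T)
      l.head.asIdeal (by rw [(RingHom.injective_iff_ker_eq_bot _).1 hinj]; exact bot_le)
    have : Q.LiesOver (RelSeries.head l).asIdeal := ⟨hQo.symm⟩
    obtain ⟨L, hL, -⟩ := Ideal.exists_ltSeries_of_hasGoingUp l Q
    rw [← hL]
    exact le_iSup (fun L : LTSeries (PrimeSpectrum T) => (L.length : WithBot ℕ∞)) L

theorem aux_rank_min (R : Type) [CommRing R] [Algebra ℂ R] [Algebra.Smooth ℂ R]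
    (p : Ideal R) [hp : p.IsPrime] (hmin : p ∈ minimalPrimes R) :
    ((Module.rankAtStalk (R := R) Ω[R⁄ℂ] ⟨p, hp⟩ : ℕ) : WithBot ℕ∞) = ringKrullDim (R ⧸ p) := by
  have hnoeth : IsNoetherianRing R := Algebra.FiniteType.isNoetherianRing ℂ R
  let B := Localization.AtPrime p
  let K := p.ResidueField
  have hnB : IsNoetherianRing B := IsLocalization.isNoetherianRing p.primeCompl _ hnoeth
  have : Algebra.EssFiniteType ℂ K := .comp ℂ R K
  have : Algebra.FormallySmooth ℂ (ResidueField B) :=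
    inferInstanceAs (Algebra.FormallySmooth ℂ K)
  have hbot : maximalIdeal B = ⊥ := by
    apply aux_max_bot
    intro x hx
    have h := IsLocalization.subsingleton_primeSpectrum_of_mem_minimalPrimes p hmin B
    rw [← mem_nilradical, nilradical_eq_sInf, Submodule.mem_sInf]
    intro J hJ
    have : (⟨J, hJ⟩ : PrimeSpectrum B) = ⟨maximalIdeal B, inferInstance⟩ := Subsingleton.elim _ _
    have h2 : J = maximalIdeal B := congrArg PrimeSpectrum.asIdeal this
    rw [h2]
    exact hx
  have hbij : Function.Bijective (algebraMap B K) := by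
    refine ⟨?_, residue_surjective⟩
    rw [RingHom.injective_iff_ker_eq_bot]
    exact ker_residue.trans hbot
  have : Algebra.FormallyEtale R B := .of_isLocalization p.primeCompl
  have : Algebra.FormallyEtale R K :=
    .of_equiv (AlgEquiv.ofBijective (IsScalarTower.toAlgHom R B K) hbij)
  rw [Module.rankAtStalk_eq]
  have e1 : Module.finrank K (K ⊗[R] Ω[R⁄ℂ]) = Module.finrank K Ω[K⁄ℂ] :=
    (tensorKaehlerEquivOfFormallyEtale ℂ R K).finrank_eq
  change ((Module.finrank K (K ⊗[R] Ω[R⁄ℂ]) : ℕ) : WithBot ℕ∞) = _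
  rw [e1]
  obtain ⟨s, g, hg, hfin⟩ := exists_finite_inj_algHom_of_fg ℂ (R ⧸ p)
  let S := MvPolynomial (Fin s) ℂ
  algebraize [g.toRingHom]
  let : Algebra S K := ((algebraMap (R ⧸ p) K).comp g.toRingHom).toAlgebra
  have : IsScalarTower S (R ⧸ p) K := .of_algebraMap_eq fun _ => rfl
  have : IsScalarTower ℂ (R ⧸ p) K := inferInstance
  have : IsScalarTower ℂ S K := .of_algebraMap_eq fun x => by
    rw [IsScalarTower.algebraMap_apply S (R ⧸ p) K,
      ← IsScalarTower.algebraMap_apply ℂ S (R ⧸ p), ← IsScalarTower.algebraMap_apply ℂ (R ⧸ p) K]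
  have : Module.Finite S (R ⧸ p) := hfin
  have hinjK : Function.Injective (algebraMap S K) :=
    (IsFractionRing.injective (R ⧸ p) K).comp hg
  have : FaithfulSMul S K := (faithfulSMul_iff_algebraMap_injective S K).2 hinjK
  let := FractionRing.liftAlgebra S K
  have : Algebra.IsAlgebraic S K := (IsFractionRing.isAlgebraic_iff' S (R ⧸ p) K).1 inferInstance
  have : Algebra.IsAlgebraic (FractionRing S) K :=
    (IsFractionRing.comap_isAlgebraic_iff (A := S) (K := FractionRing S) (C := K)).1 inferInstance
  have : Algebra.FormallyEtale (FractionRing S) K := .of_isSeparable _ _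
  have : Algebra.FormallyEtale S (FractionRing S) := .of_isLocalization (nonZeroDivisors S)
  have : Algebra.FormallyEtale S K := .comp S (FractionRing S) K
  have e2 : Module.finrank K (K ⊗[S] Ω[S⁄ℂ]) = Module.finrank K Ω[K⁄ℂ] :=
    (tensorKaehlerEquivOfFormallyEtale ℂ S K).finrank_eq
  rw [← e2, Module.finrank_baseChange, Module.finrank_eq_card_basis (mvPolynomialBasis ℂ (Fin s)),
    aux_integral_dim S (R ⧸ p) hg, MvPolynomial.ringKrullDim_of_isNoetherianRing]
  simp

theorem aux_rank_le (R : Type) [CommRing R] [Algebra ℂ R] [Algebra.Smooth ℂ R]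
    (p : PrimeSpectrum R) :
    ((Module.rankAtStalk (R := R) Ω[R⁄ℂ] p : ℕ) : WithBot ℕ∞) ≤ ringKrullDim R := by
  obtain ⟨q, hq, hqp⟩ := Ideal.exists_minimalPrimes_le (I := ⊥) (J := p.asIdeal) bot_le
  have hqP : q.IsPrime := hq.1.1
  rw [← Module.rankAtStalk_eq_of_le_of_finite_of_flat (p := ⟨q, hqP⟩) (q := p) _ hqp,
    aux_rank_min R q hq]
  exact ringKrullDim_quotient_le q

theorem aux_rank_dom (R : Type) [CommRing R] [IsDomain R] [Algebra ℂ R] [Algebra.Smooth ℂ R]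
    (p : PrimeSpectrum R) :
    ((Module.rankAtStalk (R := R) Ω[R⁄ℂ] p : ℕ) : WithBot ℕ∞) = ringKrullDim R := by
  rw [← Module.rankAtStalk_eq_of_le_of_finite_of_flat (p := ⟨⊥, inferInstance⟩) (q := p) _ bot_le,
    aux_rank_min R ⊥ (by simp [IsDomain.minimalPrimes_eq_singleton_bot])]
  exact ringKrullDim_eq_of_ringEquiv (RingEquiv.quotientBot R)

theorem aux_finrank_der (R : Type) [CommRing R] [Algebra ℂ R] [Algebra.Smooth ℂ R]
    (K : Type) [Field K] [Algebra ℂ K] [Algebra R K] [IsScalarTower ℂ R K] :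
    Module.Finite K (Derivation ℂ R K) ∧ ∃ p : PrimeSpectrum R,
    Module.finrank K (Derivation ℂ R K) = Module.rankAtStalk (R := R) Ω[R⁄ℂ] p := by
  let e1 : (Ω[R⁄ℂ] →ₗ[R] K) ≃ₗ[K] Derivation ℂ R K :=
    { KaehlerDifferential.linearMapEquivDerivation ℂ R (M := K) with
      map_smul' := fun c x => by ext; rfl }
  let e2 : Module.Dual K (K ⊗[R] Ω[R⁄ℂ]) ≃ₗ[K] (Ω[R⁄ℂ] →ₗ[R] K) :=
    (LinearMap.liftBaseChangeEquiv K).symm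
  refine ⟨Module.Finite.equiv (e2.trans e1), (⊥ : PrimeSpectrum K).comap (algebraMap R K), ?_⟩
  rw [← (e2.trans e1).finrank_eq, Subspace.dual_finrank_eq, ← Module.rankAtStalk_baseChange,
    Module.rankAtStalk_eq_finrank_of_free]
  rfl
end Part1

section Part2
open KaehlerDifferential

/-- Evaluation of derivations at a finite family. -/
noncomputable def auxEval (R : Type) [CommRing R] [Algebra ℂ R]
    (K : Type) [Field K] [Algebra ℂ K] [Algebra R K] {n : ℕ}
    (s : Fin n → R) : Derivation ℂ R K →ₗ[K] (Fin n → K) where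
  toFun D i := D (s i)
  map_add' _ _ := rfl
  map_smul' _ _ := rfl

theorem aux_ker (R : Type) [CommRing R] [Algebra ℂ R] (I : Ideal R)
    (K : Type) [Field K] [Algebra ℂ K] [Algebra R K] [Algebra (R ⧸ I) K]
    [IsScalarTower R (R ⧸ I) K] {n : ℕ}
    (s : Fin n → R) (hI : I = Ideal.span (Set.range s)) :
    Nonempty (LinearMap.ker (auxEval R K s) ≃ₗ[K] Derivation ℂ (R ⧸ I) K) := by
  have hsm : ∀ (a : R) (x : K), (Ideal.Quotient.mk I a) • x = a • x := fun a x =>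
    (algebraMap_smul (R ⧸ I) a x)
  have hz : ∀ a ∈ I, ∀ x : K, a • x = 0 := fun a ha x => by
    rw [← hsm, Ideal.Quotient.eq_zero_iff_mem.2 ha, zero_smul]
  have hker : ∀ D : LinearMap.ker (auxEval R K s), ∀ a ∈ I, D.1 a = 0 := by
    intro D a ha
    have hD : ∀ i, D.1 (s i) = 0 := fun i => congrFun (LinearMap.mem_ker.1 D.2) i
    have ha' := ha
    rw [hI] at ha'
    induction ha' using Submodule.span_induction with
    | mem x h => obtain ⟨i, rfl⟩ := h; exact hD i
    | zero => simp
    | add x y hx hy h1 h2 => rw [map_add, h1 (hI ▸ hx), h2 (hI ▸ hy), add_zero]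
    | smul c x hx h =>
      have hx' : x ∈ I := hI ▸ hx
      rw [smul_eq_mul, Derivation.leibniz, h hx', smul_zero, zero_add, hz x hx']
  let F : Derivation ℂ (R ⧸ I) K →ₗ[K] LinearMap.ker (auxEval R K s) :=
    { toFun := fun D => ⟨Derivation.mk' (D.toLinearMap ∘ₗ (Ideal.Quotient.mkₐ ℂ I).toLinearMap)
        (fun a b => by
          change D (Ideal.Quotient.mk I (a * b)) = a • D (Ideal.Quotient.mk I b) +
            b • D (Ideal.Quotient.mk I a)
          rw [map_mul, Derivation.leibniz, hsm, hsm]), by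
          rw [LinearMap.mem_ker]
          ext i
          change D (Ideal.Quotient.mk I (s i)) = 0
          rw [Ideal.Quotient.eq_zero_iff_mem.2 (hI ▸ Ideal.subset_span ⟨i, rfl⟩), map_zero]⟩
      map_add' := fun _ _ => rfl
      map_smul' := fun _ _ => rfl }
  refine ⟨(LinearEquiv.ofBijective F ⟨?_, ?_⟩).symm⟩
  · intro D E h
    ext x
    obtain ⟨a, rfl⟩ := Ideal.Quotient.mk_surjective x
    exact congrArg (fun D : LinearMap.ker (auxEval R K s) => D.1 a) h
  · intro D
    let L : (R ⧸ I) →ₗ[ℂ] K := (Submodule.liftQ (I.restrictScalars ℂ) D.1.toLinearMap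
      (fun a ha => hker D a ha))
    have hL : ∀ a, L (Ideal.Quotient.mk I a) = D.1 a := fun a => rfl
    refine ⟨Derivation.mk' L ?_, ?_⟩
    · intro x y
      obtain ⟨a, rfl⟩ := Ideal.Quotient.mk_surjective x
      obtain ⟨b, rfl⟩ := Ideal.Quotient.mk_surjective y
      rw [← map_mul, hL, hL, hL, hsm, hsm, Derivation.leibniz]
    · ext a
      rfl

theorem aux_dims (R : Type) [CommRing R] [Algebra ℂ R] [Algebra.Smooth ℂ R] (I : Ideal R)
    (K : Type) [Field K] [Algebra ℂ K] [Algebra R K] [IsScalarTower ℂ R K] [Algebra (R ⧸ I) K]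
    [IsScalarTower R (R ⧸ I) K] {n : ℕ}
    (s : Fin n → R) (hI : I = Ideal.span (Set.range s)) :
    Module.finrank K (LinearMap.range (auxEval R K s)) +
      Module.finrank K (Derivation ℂ (R ⧸ I) K) = Module.finrank K (Derivation ℂ R K) := by
  have := (aux_finrank_der R K).1
  obtain ⟨e⟩ := aux_ker R I K s hI
  rw [← e.finrank_eq]
  exact LinearMap.finrank_range_add_finrank_ker _

/-- Existence of derivations with prescribed values modulo a maximal ideal. -/
theorem aux_exists_der (R : Type) [CommRing R] [IsDomain R] [Algebra ℂ R] [Algebra.Smooth ℂ R]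
    (I : Ideal R) {n : ℕ}
    (s : Fin n → R) (hI : I = Ideal.span (Set.range s)) [Algebra.Smooth ℂ (R ⧸ I)]
    (hdim : ringKrullDim (R ⧸ I) + n = ringKrullDim R)
    (p : Ideal R) [p.IsMaximal] (hp : I ≤ p) (v : Fin n → R) :
    ∃ D : Derivation ℂ R R, ∀ i, D (s i) - v i ∈ p := by
  let : Field (R ⧸ p) := Ideal.Quotient.field p
  let : Algebra (R ⧸ I) (R ⧸ p) := (Ideal.Quotient.factor hp).toAlgebra
  have : IsScalarTower R (R ⧸ I) (R ⧸ p) := .of_algebraMap_eq fun _ => rfl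
  have : IsScalarTower ℂ (R ⧸ I) (R ⧸ p) := .of_algebraMap_eq fun _ => rfl
  obtain ⟨-, q1, h1⟩ := aux_finrank_der R (R ⧸ p)
  obtain ⟨-, q2, h2⟩ := aux_finrank_der (R ⧸ I) (R ⧸ p)
  have h3 := aux_rank_dom R q1
  have h4 := aux_rank_le (R ⧸ I) q2
  have h5 := aux_dims R I (R ⧸ p) s hI
  rw [← h1] at h3
  rw [← h2] at h4
  have h6 : Module.finrank (R ⧸ p) (Derivation ℂ (R ⧸ I) (R ⧸ p)) + n ≤
      Module.finrank (R ⧸ p) (Derivation ℂ R (R ⧸ p)) := by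
    have : ((Module.finrank (R ⧸ p) (Derivation ℂ (R ⧸ I) (R ⧸ p)) + n : ℕ) : WithBot ℕ∞) ≤
      ((Module.finrank (R ⧸ p) (Derivation ℂ R (R ⧸ p)) : ℕ) : WithBot ℕ∞) := by
      rw [h3, ← hdim]
      push_cast
      gcongr
    exact_mod_cast this
  have htop : LinearMap.range (auxEval R (R ⧸ p) s) = ⊤ := by
    apply Submodule.eq_top_of_finrank_eq
    apply le_antisymm (Submodule.finrank_le _)
    rw [Module.finrank_fin_fun]
    omega
  obtain ⟨E, hE⟩ := LinearMap.range_eq_top.1 htop (fun i => Ideal.Quotient.mk p (v i))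
  obtain ⟨χ, hχ⟩ := Module.projective_lifting_property (Submodule.mkQ p)
    E.liftKaehlerDifferential (Submodule.mkQ_surjective p)
  refine ⟨χ.compDer (D ℂ R), fun i => ?_⟩
  rw [← Ideal.Quotient.eq]
  have h7 := LinearMap.congr_fun hχ (D ℂ R (s i))
  rw [Derivation.liftKaehlerDifferential_comp_D] at h7
  exact h7.trans (congrFun hE i)

/-- Jacobian criterion for a hypersurface. -/
theorem aux_jac (P : Type) [CommRing P] [Algebra ℂ P] [Algebra.Smooth ℂ P] (s : P)
    (h : ∀ n : Ideal P, n.IsMaximal → s ∈ n → ∃ D : Derivation ℂ P P, D s ∉ n) :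
    Algebra.Smooth ℂ (P ⧸ Ideal.span {s}) := by
  let ev : Derivation ℂ P P →ₗ[P] P :=
    { toFun := fun D => D s, map_add' := fun _ _ => rfl, map_smul' := fun _ _ => rfl }
  have htop : LinearMap.range ev ⊔ Ideal.span {s} = (⊤ : Ideal P) := by
    by_contra hne
    obtain ⟨n, hn, hle⟩ := Ideal.exists_le_maximal _ hne
    obtain ⟨D, hD⟩ := h n hn (hle (Ideal.mem_sup_right (Ideal.mem_span_singleton_self s)))
    exact hD (hle (Ideal.mem_sup_left ⟨D, rfl⟩))
  obtain ⟨a, ⟨D, rfl⟩, b, hb, hab⟩ := Submodule.mem_sup.1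
    ((Ideal.eq_top_iff_one _).1 htop)
  obtain ⟨c, rfl⟩ := Ideal.mem_span_singleton'.1 hb
  have hDs : D s + c * s = 1 := hab
  have hnoeth : IsNoetherianRing P := Algebra.FiniteType.isNoetherianRing ℂ P
  refine ⟨?_, (Algebra.FinitePresentation.quotient
    (IsNoetherian.noetherian (Ideal.span {s})))⟩
  let f := Ideal.Quotient.mkₐ ℂ (Ideal.span {s})
  have hker : RingHom.ker f.toRingHom = Ideal.span {s} := Ideal.mk_ker
  have hs : s ∈ RingHom.ker f.toRingHom := by
    rw [hker]; exact Ideal.mem_span_singleton_self s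
  have hss : ∀ x, s * s * x ∈ RingHom.ker f.toRingHom ^ 2 := fun x =>
    Ideal.mul_mem_right _ _ (pow_two (RingHom.ker f.toRingHom) ▸ Ideal.mul_mem_mul hs hs)
  let Q := P ⧸ RingHom.ker f.toRingHom ^ 2
  let ψ : P →ₐ[ℂ] Q := AlgHom.ofLinearMap
    ((Ideal.Quotient.mkₐ ℂ (RingHom.ker f.toRingHom ^ 2)).toLinearMap ∘ₗ
      (LinearMap.id - (LinearMap.mulLeft ℂ s) ∘ₗ D.toLinearMap))
    (by
      change Ideal.Quotient.mk _ (1 - s * D 1) = 1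
      rw [Derivation.map_one_eq_zero, mul_zero, sub_zero, map_one]) (fun x y => by
      change Ideal.Quotient.mk _ (x * y - s * D (x * y)) =
        Ideal.Quotient.mk _ (x - s * D x) * Ideal.Quotient.mk _ (y - s * D y)
      rw [← map_mul, Ideal.Quotient.eq, Derivation.leibniz, smul_eq_mul, smul_eq_mul]
      have := (RingHom.ker f.toRingHom ^ 2).neg_mem (hss (D x * D y))
      convert this using 1
      ring)
  have hψ : ∀ x, ψ x = Ideal.Quotient.mk _ (x - s * D x) := fun x => rfl
  have hψs : ∀ x ∈ Ideal.span {s}, ψ x = 0 := by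
    intro x hx
    obtain ⟨y, rfl⟩ := Ideal.mem_span_singleton'.1 hx
    rw [map_mul, hψ s]
    have : Ideal.Quotient.mk (RingHom.ker f.toRingHom ^ 2) (s - s * D s) = 0 := by
      rw [Ideal.Quotient.eq_zero_iff_mem]
      convert hss c using 1
      linear_combination (-s) * hDs
    rw [this, mul_zero]
  refine Algebra.FormallySmooth.of_split f (Ideal.Quotient.liftₐ (Ideal.span {s}) ψ hψs) ?_
  ext x
  obtain ⟨a, rfl⟩ := Ideal.Quotient.mk_surjective x
  change f (a - s * D a) = f a
  rw [map_sub, map_mul, show f s = 0 from hs, zero_mul, sub_zero]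

end Part2

theorem stmt14 (A : Type) [CommRing A] [IsDomain A] [Algebra ℂ A]
    [Algebra.FiniteType ℂ A] (hA : Algebra.Smooth ℂ A)
    (f g : A) (m : ℕ) (hm : 2 ≤ m)
    (hf_sm : Algebra.Smooth ℂ (A ⧸ Ideal.span {f}))
    (hf_dim : ringKrullDim (A ⧸ Ideal.span {f}) + 1 = ringKrullDim A)
    (hfg_sm : Algebra.Smooth ℂ (A ⧸ Ideal.span {f, g}))
    (hfg_dim : ringKrullDim (A ⧸ Ideal.span {f, g}) + 2 = ringKrullDim A) :
    Algebra.Smooth ℂ (Polynomial A ⧸ Ideal.span {(X : Polynomial A) ^ m * C g - C f}) ∧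
      ringKrullDim (Polynomial A ⧸ Ideal.span {(X : Polynomial A) ^ m * C g - C f}) =
        ringKrullDim A := by
  have hnoeth : IsNoetherianRing A := Algebra.FiniteType.isNoetherianRing ℂ A
  have hjac : IsJacobsonRing A := isJacobsonRing_of_finiteType (A := ℂ)
  have hAX : Algebra.Smooth A A[X] := ⟨inferInstance, inferInstance⟩
  have hPX : Algebra.Smooth ℂ A[X] := .comp ℂ A A[X]
  set s : A[X] := X ^ m * C g - C f with hs
  have hev : eval 0 s = -f := by
    simp [hs, show m ≠ 0 by omega]
  -- the coefficientwise derivations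
  have hext : ∀ E : Derivation ℂ A A, ∃ E' : Derivation ℂ A[X] A[X],
      E' s = X ^ m * C (E g) - C (E f) := by
    intro E
    refine ⟨PolynomialModule.equivPolynomialSelf.compDer E.mapCoeffs, ?_⟩
    ext i
    change E (s.coeff i) = _
    simp only [hs, coeff_sub, coeff_X_pow_mul', coeff_C, map_sub]
    split_ifs <;> simp
  have hsm : Algebra.Smooth ℂ (A[X] ⧸ Ideal.span {s}) := by
    apply aux_jac
    intro n hn hsn
    let p : Ideal A := n.comap C
    have hpmax : p.IsMaximal := Polynomial.isMaximal_comap_C_of_isJacobsonRing n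
    have hmem : ∀ a ∈ p, C a ∈ n := fun a ha => ha
    have key : ∀ E : Derivation ℂ A A, X ^ m * C (E g) ∈ n → E f - 1 ∈ p →
        ∃ D : Derivation ℂ A[X] A[X], D s ∉ n := by
      intro E h1 h2
      obtain ⟨E', hE'⟩ := hext E
      refine ⟨E', fun h => hn.ne_top ((Ideal.eq_top_iff_one n).2 ?_)⟩
      rw [hE'] at h
      have h3 := hmem _ h2
      have h4 := n.sub_mem h1 (n.add_mem h h3)
      convert h4 using 1
      simp
    by_cases hX : (X : A[X]) ∈ n
    · have hXm : (X : A[X]) ^ m ∈ n := Ideal.pow_mem_of_mem n hX m (by omega)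
      have hf : f ∈ p := by
        have := n.sub_mem (n.mul_mem_right (C g) hXm) hsn
        rw [hs, sub_sub_cancel] at this
        exact this
      obtain ⟨E, hE⟩ := aux_exists_der A (Ideal.span {f}) ![f] (by simp)
        (by simpa using hf_dim) p ((Ideal.span_singleton_le_iff_mem _).2 hf) ![1]
      exact key E (n.mul_mem_right _ hXm) (by simpa using hE 0)
    · by_cases hg : C g ∈ n
      · have hf : f ∈ p := by
          have := n.sub_mem (n.mul_mem_left (X ^ m) hg) hsn
          rw [hs, sub_sub_cancel] at this
          exact this
        obtain ⟨E, hE⟩ := aux_exists_der A (Ideal.span {f, g}) ![f, g] (by simp [Set.pair_comm])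
          (by simpa using hfg_dim) p (by
            rw [Ideal.span_le]; rintro x (rfl | rfl)
            · exact hf
            · exact hg) ![1, 0]
        exact key E (n.mul_mem_left _ (hmem _ (by simpa using hE 1))) (by simpa using hE 0)
      · refine ⟨(Polynomial.derivative' (R := A)).restrictScalars ℂ, ?_⟩
        have hd : ((Polynomial.derivative' (R := A)).restrictScalars ℂ) s =
            C (m : A) * X ^ (m - 1) * C g := by
          change derivative s = _
          simp [hs, derivative_X_pow]
          ring
        rw [hd]
        intro h
        rcases hn.isPrime.mem_or_mem h with h | h
        · rcases hn.isPrime.mem_or_mem h with h | h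
          · have hu : IsUnit (C (m : A)) := by
              rw [show (m : A) = algebraMap ℂ A (m : ℂ) by simp]
              exact ((IsUnit.mk0 (m : ℂ) (by exact_mod_cast (show m ≠ 0 by omega))).map _).map _
            exact hn.ne_top (n.eq_top_of_isUnit_mem h hu)
          · exact hX (hn.isPrime.mem_of_pow_mem _ h)
        · exact hg h
  refine ⟨hsm, ?_⟩
  have hdimX := Polynomial.ringKrullDim_of_isNoetherianRing (R := A)
  have hd := aux_rank_dom A ⊥
  obtain ⟨d, hd'⟩ : ∃ d : ℕ, ringKrullDim A = d := ⟨_, hd.symm⟩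
  have hf0 : f ≠ 0 := by
    rintro rfl
    have : ringKrullDim (A ⧸ Ideal.span {(0 : A)}) = ringKrullDim A := by
      rw [Ideal.span_singleton_zero]
      exact ringKrullDim_eq_of_ringEquiv (RingEquiv.quotientBot A)
    rw [this, hd'] at hf_dim
    have : d + 1 = d := by exact_mod_cast hf_dim
    omega
  have hs0 : s ≠ 0 := by
    intro h
    rw [h, eval_zero] at hev
    exact hf0 (by simpa using hev.symm)
  have hfu : ¬ IsUnit f := by
    intro hu
    rw [← Ideal.span_singleton_eq_top] at hu
    have : Subsingleton (A ⧸ Ideal.span {f}) := Ideal.Quotient.subsingleton_iff.2 hu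
    rw [ringKrullDim_eq_bot_of_subsingleton, hd'] at hf_dim
    simp at hf_dim
  have hsu : Nontrivial (A[X] ⧸ Ideal.span {s}) := by
    rw [Ideal.Quotient.nontrivial_iff]
    intro h
    rw [Ideal.span_singleton_eq_top] at h
    have := h.map (evalRingHom (0 : A))
    rw [coe_evalRingHom, hev, IsUnit.neg_iff] at this
    exact hfu this
  have hupper := ringKrullDim_quotient_succ_le_of_nonZeroDivisor (mem_nonZeroDivisors_of_ne_zero hs0)
  obtain ⟨q, hq⟩ := Ideal.exists_maximal (A[X] ⧸ Ideal.span {s})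
  let K := q.ResidueField
  obtain ⟨-, q1, h1⟩ := aux_finrank_der A[X] K
  obtain ⟨-, q2, h2⟩ := aux_finrank_der (A[X] ⧸ Ideal.span {s}) K
  have h3 := aux_rank_dom A[X] q1
  have h4 := aux_rank_le (A[X] ⧸ Ideal.span {s}) q2
  have h5 := aux_dims A[X] (Ideal.span {s}) K ![s] (by simp)
  have h6 := Submodule.finrank_le (LinearMap.range (auxEval A[X] K ![s]))
  rw [Module.finrank_fin_fun] at h6
  rw [← h1, hdimX, hd'] at h3
  rw [← h2] at h4
  rw [hdimX, hd'] at hupper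
  rw [hd']
  have h7 : Module.finrank K (Derivation ℂ A[X] K) = d + 1 := by exact_mod_cast h3
  apply le_antisymm
  · exact ENat.WithBot.add_le_add_one_right_iff.1 hupper
  · refine le_trans ?_ h4
    exact_mod_cast (show d ≤ Module.finrank K (Derivation ℂ (A[X] ⧸ Ideal.span {s}) K) by omega)
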